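/- arXiv:2111.11901 — 6 statements merged into one kernel-verified Lean document; each statement's English description precedes it below -/
import Mathlib

section
/- Let q be a prime power, let t ≥ 1 and 0 ≤ h < k ≤ q be integers with k + t ≤ n ≤ q, let η ∈ 𝔽_q*, let α_1,…,α_n ∈ 𝔽_q be pairwise distinct, and let v = (v_1,…,v_n) ∈ (𝔽_q*)^n. Then the dual code C_{k,n}(α,v,t,h,η)^⊥ is a linear [n, n−k, d] code over 𝔽_q whose minimum Hamming distance d satisfies max{h+1, k−h} ≤ d ≤ k+1. -/
/-!
The dual code is the kernel of the `k × n` generator matrix `tgrsMatrix`, whose rows are the values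
of the basis `x ^ j` (`j ≠ h`), `x ^ h + η x ^ (k - 1 + t)` of the space of twisted polynomials.

*Dimension.* A linear relation between the rows is a twisted polynomial of degree at most
`k - 1 + t < n` with the `n` distinct roots `α i`, hence zero; so the matrix has rank `k`
(`tgrsMatrix_rank`).

*Lower bound.* A nonzero vector orthogonal to `(α i ^ j)ᵢ` for all `j < m` has weight at least
`m + 1` (`lt_hwt_of_moments`). If `x` is in the dual, this applies to `v i * x i` with `m = h`, using
the monomials `1, …, x ^ (h - 1)`, and to `v i * x i * α i ^ (h + 1)` with `m = k - h - 1`, using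
`x ^ (h + 1), …, x ^ (k - 1)`. The latter vector vanishes only if `x` is supported at a position with
`α i = 0`, and that is excluded by pairing `x` with the basis polynomial of index `0`, which has
value `1` at `0`.

*Upper bound.* The Singleton argument: the `k` equations of the dual together with the vanishing of
all coordinates from position `k + 1` on are `n - 1` linear conditions on `n` unknowns.
-/

open Polynomial Finset

/-- The `(k,t,h,η)`-twisted polynomial with coefficients `a 0, …, a (k-1)`:
`Σ_{i<k} a_i x^i + η a_h x^{k-1+t}`. -/
noncomputable def twistedPoly {F : Type*} [Field F] (k t h : ℕ) (η : F) (a : ℕ → F) :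
    Polynomial F :=
  (∑ i ∈ Finset.range k, Polynomial.C (a i) * Polynomial.X ^ i)
    + Polynomial.C (η * a h) * Polynomial.X ^ (k - 1 + t)

/-- The twisted generalized Reed–Solomon code `C_{k,n}(α,v,t,h,η)`. -/
def TGRS {F : Type*} [Field F] (n k t h : ℕ) (η : F) (α v : Fin n → F) :
    Set (Fin n → F) :=
  { c | ∃ a : ℕ → F, ∀ i, c i = v i * (twistedPoly k t h η a).eval (α i) }

/-- The dual code with respect to the standard inner product. -/
def dualCode {F : Type*} [Field F] {n : ℕ} (C : Set (Fin n → F)) : Set (Fin n → F) :=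
  { x | ∀ c ∈ C, ∑ i, x i * c i = 0 }

/-- Hamming weight of a vector. -/
noncomputable def hwt {F : Type*} [Field F] {n : ℕ} (c : Fin n → F) : ℕ :=
  {i | c i ≠ 0}.ncard

/-- Minimum Hamming distance of a code. -/
noncomputable def minDist {F : Type*} [Field F] {n : ℕ} (C : Set (Fin n → F)) : ℕ :=
  sInf { d | ∃ c ∈ C, c ≠ 0 ∧ hwt c = d }

/-- Singleton defect `S(C) = n + 1 - dim C - d(C)`. -/
noncomputable def sdefect {F : Type*} [Field F] {n : ℕ} (C : Set (Fin n → F)) : ℤ :=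
  (n : ℤ) + 1 - (Module.finrank F (Submodule.span F C) : ℤ) - (minDist C : ℤ)

/-- `S_k(1,α)`. -/
def Sk1 {F : Type*} [Field F] {n : ℕ} (k : ℕ) (α : Fin n → F) : Set F :=
  { x | ∃ I : Finset (Fin n), I.card = k ∧ x = ∑ i ∈ I, α i }

/-- `S_k(2,α)`. -/
def Sk2 {F : Type*} [Field F] {n : ℕ} (k : ℕ) (α : Fin n → F) : Set F :=
  { x | ∃ I : Finset (Fin n), I.card = k ∧
    x = (∑ i ∈ I, α i) * (∑ s ∈ I.powersetCard 2, ∏ i ∈ s, α i)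
        - ∑ s ∈ I.powersetCard 3, ∏ i ∈ s, α i }

/-- `S̃_k(2,α)`. -/
def Sk2t {F : Type*} [Field F] {n : ℕ} (k : ℕ) (α : Fin n → F) : Set F :=
  { x | ∃ I : Finset (Fin n), I.card = k + 1 ∧ (∑ i ∈ I, α i) = 0 ∧
    x = - ∑ s ∈ I.powersetCard 3, ∏ i ∈ s, α i }

/-- The `j`-th basis twisted polynomial, evaluated at `z`. -/
def twistedBasis {F : Type*} [Field F] (k t h : ℕ) (η : F) (j : ℕ) (z : F) : F :=
  z ^ j + if j = h then η * z ^ (k - 1 + t) else 0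

theorem eval_twistedPoly {F : Type*} [Field F] {k t h : ℕ} (hhk : h < k) (η : F) (a : ℕ → F)
    (z : F) : (twistedPoly k t h η a).eval z
      = ∑ j ∈ Finset.range k, a j * twistedBasis k t h η j z := by
  simp only [twistedPoly, twistedBasis, eval_add, eval_finsetSum, eval_mul, eval_C, eval_pow,
    eval_X, mul_add, Finset.sum_add_distrib, mul_ite, mul_zero, Finset.sum_ite_eq',
    Finset.mem_range, if_pos hhk]
  ring

/-- The generator matrix of the TGRS code in the basis `twistedBasis`. -/
def tgrsMatrix {F : Type*} [Field F] (n k t h : ℕ) (η : F) (α v : Fin n → F) :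
    Matrix (Fin k) (Fin n) F :=
  fun j i => v i * twistedBasis k t h η j (α i)

theorem dualCode_eq_ker {F : Type*} [Field F] {n k t h : ℕ} (hhk : h < k) (η : F)
    (α v : Fin n → F) :
    dualCode (TGRS n k t h η α v)
      = (LinearMap.ker (tgrsMatrix n k t h η α v).mulVecLin : Set (Fin n → F)) := by
  ext x
  simp only [dualCode, TGRS, Set.mem_ofPred_eq, SetLike.mem_coe, LinearMap.mem_ker,
    Matrix.mulVecLin_apply]
  constructor
  · intro hx
    funext j
    have := hx (fun i => v i * (twistedPoly k t h η (Pi.single (j : ℕ) 1)).eval (α i))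
      ⟨_, fun i => rfl⟩
    simp only [eval_twistedPoly hhk, Pi.single_apply, ite_mul, one_mul, zero_mul,
      Finset.sum_ite_eq', Finset.mem_range, if_pos j.2] at this
    simp only [Matrix.mulVec, dotProduct, tgrsMatrix, Pi.zero_apply]
    rw [← this]
    exact Finset.sum_congr rfl fun i _ => by ring
  · rintro hx c ⟨a, hc⟩
    have hx' : ∀ j ∈ Finset.range k, a j * ∑ i, x i * (v i * twistedBasis k t h η j (α i)) = 0 := by
      intro j hj
      have := congrFun hx ⟨j, Finset.mem_range.1 hj⟩
      simp only [Matrix.mulVec, dotProduct, tgrsMatrix, Pi.zero_apply] at this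
      rw [mul_eq_zero]; right
      rw [← this]
      exact Finset.sum_congr rfl fun i _ => by ring
    rw [← Finset.sum_eq_zero hx']
    simp only [hc, eval_twistedPoly hhk, Finset.mul_sum]
    rw [Finset.sum_comm]
    exact Finset.sum_congr rfl fun i _ => Finset.sum_congr rfl fun j _ => by ring

theorem tgrsMatrix_rank {F : Type*} [Field F] {n k t h : ℕ} (ht : 1 ≤ t) (hhk : h < k)
    (hktn : k + t ≤ n) (η : F) (α v : Fin n → F)
    (hα : Function.Injective α) (hv : ∀ i, v i ≠ 0) :
    (tgrsMatrix n k t h η α v).rank = k := by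
  have hli : LinearIndependent F (tgrsMatrix n k t h η α v).row := by
    rw [Fintype.linearIndependent_iff]
    intro g hg
    let a : ℕ → F := fun j => if hj : j < k then g ⟨j, hj⟩ else 0
    have hroot : ∀ i, (twistedPoly k t h η a).eval (α i) = 0 := by
      intro i
      have := congrFun hg i
      simp only [Finset.sum_apply, Pi.smul_apply, Matrix.row, tgrsMatrix, smul_eq_mul,
        Pi.zero_apply] at this
      rw [eval_twistedPoly hhk, Finset.sum_range]
      apply (mul_eq_zero.1 _).resolve_left (hv i)
      rw [← this, Finset.mul_sum]
      refine Finset.sum_congr rfl fun j _ => ?_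
      simp only [a, j.2, dif_pos]
      ring
    have hdeg : (twistedPoly k t h η a).degree < n := by
      unfold twistedPoly
      refine (degree_add_le _ _).trans_lt (max_lt ?_ ?_)
      · refine (degree_sum_le _ _).trans_lt
          ((Finset.sup_lt_iff (a := (n : WithBot ℕ)) (WithBot.bot_lt_coe n)).2 ?_)
        intro j hj
        refine (degree_C_mul_X_pow_le _ _).trans_lt ?_
        have := Finset.mem_range.1 hj
        exact_mod_cast (by omega : j < n)
      · refine (degree_C_mul_X_pow_le _ _).trans_lt ?_
        exact_mod_cast (by omega : k - 1 + t < n)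
    have hzero : twistedPoly k t h η a = 0 := by
      refine eq_zero_of_degree_lt_of_eval_index_eq_zero (s := Finset.univ) (v := α) hα.injOn ?_
        fun i _ => hroot i
      simpa using hdeg
    intro j
    have hc := congrArg (fun p => p.coeff (j : ℕ)) hzero
    -- `j < k ≤ k - 1 + t`, so the twist does not reach the coefficient of index `j`.
    have hne : (j : ℕ) ≠ k - 1 + t := by omega
    simpa [twistedPoly, finsetSum_coeff, coeff_C_mul, coeff_X_pow, hne, a, j.2] using hc
  simpa using hli.rank_matrix

/-- Vandermonde bound: a nonzero vector killed by the first `m` power moments of distinct points has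
weight greater than `m`. Otherwise a polynomial of degree less than `m` isolates one position of the
support. -/
theorem lt_hwt_of_moments {F : Type*} [Field F] {n m : ℕ} {α y : Fin n → F}
    (hα : Function.Injective α) (hy : y ≠ 0) (hm : ∀ j < m, ∑ i, y i * α i ^ j = 0) :
    m < hwt y := by
  classical
  by_contra! hlt
  obtain ⟨i₀, hi₀⟩ := Function.ne_iff.1 hy
  rw [Pi.zero_apply] at hi₀
  let S : Finset (Fin n) := Finset.univ.filter fun i => y i ≠ 0
  have hS : S.card = hwt y := by
    rw [hwt, ← Set.ncard_coe_finset]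
    congr 1
    ext i
    simp [S]
  have hmem : i₀ ∈ S := by simp [S, hi₀]
  let g : F[X] := ∏ i ∈ S.erase i₀, (X - C (α i))
  have hdeg : g.natDegree < m := by
    have h1 : g.natDegree = (S.erase i₀).card := natDegree_finsetProd_X_sub_C_eq_card _ _
    have h2 := Finset.card_erase_lt_of_mem hmem
    omega
  have hsum : ∑ i, y i * g.eval (α i) = 0 := by
    simp only [eval_eq_sum_range' hdeg, Finset.mul_sum]
    rw [Finset.sum_comm]
    refine Finset.sum_eq_zero fun j hj => ?_
    have := congrArg (g.coeff j * ·) (hm j (Finset.mem_range.1 hj))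
    simp only [Finset.mul_sum, mul_zero] at this
    rw [← this]
    exact Finset.sum_congr rfl fun i _ => by ring
  rw [Finset.sum_eq_single_of_mem i₀ (Finset.mem_univ _)] at hsum
  · refine (mul_ne_zero hi₀ ?_) hsum
    simp only [g, eval_prod, eval_sub, eval_X, eval_C]
    refine Finset.prod_ne_zero_iff.2 fun i hi => sub_ne_zero.2 fun he => ?_
    exact (Finset.mem_erase.1 hi).1 (hα he).symm
  · intro i _ hi
    by_cases hyi : y i = 0
    · rw [hyi, zero_mul]
    · have : i ∈ S.erase i₀ := Finset.mem_erase.2 ⟨hi, by simp [S, hyi]⟩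
      rw [mul_eq_zero]
      right
      simp only [g, eval_prod]
      exact Finset.prod_eq_zero this (by simp)

theorem hwt_le_of_imp {F : Type*} [Field F] {n : ℕ} {x y : Fin n → F}
    (hxy : ∀ i, x i = 0 → y i = 0) : hwt y ≤ hwt x :=
  Set.ncard_le_ncard (fun i (hi : y i ≠ 0) => fun h0 => hi (hxy i h0)) (Set.toFinite _)

theorem le_hwt_of_mem_dual {F : Type*} [Field F] {n k t h : ℕ} (ht : 1 ≤ t) (hhk : h < k) (η : F)
    {α v x : Fin n → F} (hα : Function.Injective α) (hv : ∀ i, v i ≠ 0)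
    (hx : x ∈ dualCode (TGRS n k t h η α v)) (hx0 : x ≠ 0) :
    max (h + 1) (k - h) ≤ hwt x := by
  rw [dualCode_eq_ker hhk] at hx
  have hx' : ∀ j < k, ∑ i, v i * twistedBasis k t h η j (α i) * x i = 0 := fun j hj =>
    congrFun hx ⟨j, hj⟩
  obtain ⟨i₀, hi₀⟩ := Function.ne_iff.1 hx0
  rw [Pi.zero_apply] at hi₀
  refine max_le ?_ ?_
  · refine le_trans ?_ (hwt_le_of_imp (y := fun i => v i * x i) fun i hi => by simp [hi])
    refine lt_hwt_of_moments (m := h) hα (fun h0 => mul_ne_zero (hv i₀) hi₀ (congrFun h0 i₀)) ?_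
    intro j hj
    rw [← hx' j (by omega)]
    refine Finset.sum_congr rfl fun i _ => ?_
    rw [twistedBasis, if_neg (by omega)]
    ring
  · refine le_trans ?_
      (hwt_le_of_imp (y := fun i => v i * x i * α i ^ (h + 1)) fun i hi => by simp [hi])
    have hlt := lt_hwt_of_moments (m := k - h - 1) (y := fun i => v i * x i * α i ^ (h + 1)) hα ?_ ?_
    · omega
    · intro h0
      have hcase : ∀ i, x i ≠ 0 → α i = 0 := by
        intro i hi
        have := congrFun h0 i
        simpa [hv i, hi] using this
      have h00 := hx' 0 (by omega)
      rw [Finset.sum_eq_single_of_mem i₀ (Finset.mem_univ _)] at h00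
      · -- `k - 1 + t > 0`, so the twist vanishes at `0` even when `h = 0`.
        have hpos : k - 1 + t ≠ 0 := by omega
        simp [twistedBasis, hcase i₀ hi₀, hv i₀, hi₀, zero_pow hpos] at h00
      · intro i _ hi
        by_cases hxi : x i = 0
        · rw [hxi, mul_zero]
        · exact absurd (hα ((hcase i hxi).trans (hcase i₀ hi₀).symm)) hi
    · intro j hj
      rw [← hx' (h + 1 + j) (by omega)]
      refine Finset.sum_congr rfl fun i _ => ?_
      rw [twistedBasis, if_neg (by omega)]
      ring

theorem exists_mem_dual_hwt_le {F : Type*} [Field F] {n k t h : ℕ} (hhk : h < k)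
    (hkn : k + 1 ≤ n) (η : F) (α v : Fin n → F) :
    ∃ x ∈ dualCode (TGRS n k t h η α v), x ≠ 0 ∧ hwt x ≤ k + 1 := by
  -- The map sending `x` to its syndrome and its last `n - (k + 1)` coordinates.
  let r : Fin (n - (k + 1)) → Fin n := fun i => ⟨k + 1 + i, by omega⟩
  let L : (Fin n → F) →ₗ[F] (Fin k → F) × (Fin (n - (k + 1)) → F) :=
    (tgrsMatrix n k t h η α v).mulVecLin.prod (LinearMap.funLeft F F r)
  have hker : LinearMap.ker L ≠ ⊥ := by
    apply LinearMap.ker_ne_bot_of_finrank_lt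
    simp only [Module.finrank_prod, Module.finrank_fin_fun]
    omega
  obtain ⟨x, hx, hx0⟩ := (Submodule.ne_bot_iff _).1 hker
  have hx' : L x = 0 := hx
  refine ⟨x, ?_, hx0, ?_⟩
  · rw [dualCode_eq_ker hhk]
    exact congrArg Prod.fst hx'
  · have hsub : {i | x i ≠ 0} ⊆ Set.range (Fin.castLE hkn) := by
      intro i hi
      by_cases hik : (i : ℕ) < k + 1
      · exact ⟨⟨i, hik⟩, rfl⟩
      · refine absurd ?_ hi
        have h2 : LinearMap.funLeft F F r x = 0 := congrArg Prod.snd hx'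
        have := congrFun h2 ⟨i - (k + 1), by omega⟩
        have hr : r ⟨i - (k + 1), by omega⟩ = i := Fin.ext (by simp only [r]; omega)
        simpa [LinearMap.funLeft_apply, hr] using this
    refine (Set.ncard_le_ncard hsub (Set.toFinite _)).trans ?_
    rw [← Set.image_univ]
    refine (Set.ncard_image_le (Set.toFinite _)).trans ?_
    simp [Set.ncard_univ]

/-- the dual of the TGRS code `C_{k,n}(α,v,t,h,η)` is an `[n, n-k, d]`
linear code with `max{h+1, k-h} ≤ d ≤ k+1`. -/
theorem stmt0 {F : Type*} [Field F] [Fintype F] (q n k t h : ℕ)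
    (hq : Fintype.card F = q) (ht : 1 ≤ t) (hhk : h < k) (hkq : k ≤ q)
    (hktn : k + t ≤ n) (hnq : n ≤ q)
    (η : F) (hη : η ≠ 0) (α v : Fin n → F)
    (hα : Function.Injective α) (hv : ∀ i, v i ≠ 0) :
    Module.finrank F (Submodule.span F (dualCode (TGRS n k t h η α v))) = n - k ∧
    max (h + 1) (k - h) ≤ minDist (dualCode (TGRS n k t h η α v)) ∧
    minDist (dualCode (TGRS n k t h η α v)) ≤ k + 1 := by
  have hker := dualCode_eq_ker (t := t) hhk η α v
  have hle := fun x => le_hwt_of_mem_dual (x := x) ht hhk η hα hv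
  obtain ⟨x, hx, hx0, hxw⟩ := exists_mem_dual_hwt_le (t := t) hhk (by omega) η α v
  refine ⟨?_, ?_, ?_⟩
  · rw [hker, Submodule.span_eq]
    have hrn := LinearMap.finrank_range_add_finrank_ker (tgrsMatrix n k t h η α v).mulVecLin
    have hrank := tgrsMatrix_rank ht hhk hktn η α v hα hv
    rw [Matrix.rank] at hrank
    rw [hrank, Module.finrank_fin_fun] at hrn
    omega
  · -- Nonemptiness matters here: `sInf ∅ = 0`.
    refine le_csInf (s := {d | ∃ c ∈ dualCode (TGRS n k t h η α v), c ≠ 0 ∧ hwt c = d})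
      ⟨_, x, hx, hx0, rfl⟩ ?_
    rintro _ ⟨c, hc, hc0, rfl⟩
    exact hle c hc hc0
  · have hmin : minDist (dualCode (TGRS n k t h η α v)) ≤ hwt x :=
      Nat.sInf_le ⟨x, hx, hx0, rfl⟩
    exact hmin.trans hxw
end

section
/- Let q be a prime power, let k ≥ 2 and n be integers with k + 2 ≤ n ≤ q, let η ∈ 𝔽_q*, let α_1,…,α_n ∈ 𝔽_q be pairwise distinct, and let v ∈ (𝔽_q*)^n. Then the TGRS code C = C_{k,n}(α,v,2,k−2,η) has Singleton defect S(C) = 2 if and only if η^{−1} ∈ S_k(2,α) ∩ S̃_k(2,α). -/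
/-!
A twisted polynomial `f = ∑_{i<k} a_i x^i + η a_{k-2} x^{k+1}` has degree at most `k + 1 < n`, so
evaluation is injective, the code has dimension `k`, and nonzero codewords have at most `k + 1`
zeros. Hence the Singleton defect is `2` exactly when some nonzero codeword has `k + 1` zeros, say
at the positions in `I`. Then `f = c ∏_{i ∈ I} (x - α_i)`, and such a product is twisted exactly
when its `x^k` coefficient `-c σ₁(I)` vanishes and its leading coefficient is `η` times its
`x^{k-2}` coefficient `-c σ₃(I)`; that is, `σ₁(I) = 0` and `η⁻¹ = -σ₃(I)`, which says
`η⁻¹ ∈ S̃_k(2,α)`.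

Membership in `S_k(2,α)` is then automatic (`Sk2t_subset_Sk2`): deleting an element `β` from `I`
leaves `J` with `σ₁(J) = -β` and `σ₃(I) = σ₃(J) + β σ₂(J)`, so
`-σ₃(I) = σ₁(J) σ₂(J) - σ₃(J)`.
-/

open Polynomial Finset

theorem twistedPoly_coeff {F : Type*} [Field F] {k : ℕ} (hk : 2 ≤ k) (η : F) (a : ℕ → F) (j : ℕ) :
    (twistedPoly k 2 (k - 2) η a).coeff j =
      if j < k then a j else if j = k + 1 then η * a (k - 2) else 0 := by
  have e : k - 1 + 2 = k + 1 := by omega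
  simp only [twistedPoly, e, coeff_add, finsetSum_coeff, coeff_C_mul, coeff_X_pow,
    mul_ite, mul_one, mul_zero, Finset.sum_ite_eq, Finset.mem_range]
  split_ifs <;> first | omega | simp

theorem twistedPoly_natDegree {F : Type*} [Field F] {k : ℕ} (hk : 2 ≤ k) (η : F) (a : ℕ → F) :
    (twistedPoly k 2 (k - 2) η a).natDegree ≤ k + 1 := by
  rw [natDegree_le_iff_coeff_eq_zero]
  intro j hj
  rw [twistedPoly_coeff hk, if_neg (by omega), if_neg (by omega)]

/-- A polynomial of degree at most `#I` vanishing at the `α i`, `i ∈ I`, is a multiple of the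
corresponding product of linear factors. -/
theorem eq_C_mul_prod {F : Type*} [Field F] {n : ℕ} {α : Fin n → F}
    (hα : Function.Injective α) (p : Polynomial F) (I : Finset (Fin n))
    (hd : p.natDegree ≤ I.card) (hz : ∀ i ∈ I, p.eval (α i) = 0) :
    p = C (p.coeff I.card) * ∏ i ∈ I, (X - C (α i)) := by
  have hm : (∏ i ∈ I, (X - C (α i))).Monic := monic_prod_of_monic _ _ fun i _ => monic_X_sub_C _
  have hn : (∏ i ∈ I, (X - C (α i))).natDegree = I.card := by simp
  have hc : (∏ i ∈ I, (X - C (α i))).coeff I.card = 1 := by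
    have := hm.coeff_natDegree
    rwa [hn] at this
  refine eq_of_degree_sub_lt_of_eval_index_eq I (v := α) (hα.injOn) ?_ ?_
  · rw [degree_lt_iff_coeff_zero]
    intro m h
    rw [coeff_sub, coeff_C_mul]
    rcases h.eq_or_lt with rfl | h
    · rw [hc]; ring
    · rw [coeff_eq_zero_of_natDegree_lt (lt_of_le_of_lt hd h),
        coeff_eq_zero_of_natDegree_lt (hn.trans_lt h)]
      ring
  · intro i hi
    rw [hz i hi, eval_mul, eval_prod, Finset.prod_eq_zero hi (by simp), mul_zero]

/-- The `r`-th coefficient from the top of `∏ (x - α_i)` is `(-1)^r` times the `r`-th elementary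
symmetric sum. -/
theorem coeff_prod_sub {F : Type*} [Field F] {n : ℕ} (α : Fin n → F) (I : Finset (Fin n)) (r : ℕ)
    (hr : r ≤ I.card) :
    (∏ i ∈ I, (X - C (α i))).coeff (I.card - r) =
      (-1) ^ r * ∑ s ∈ I.powersetCard r, ∏ i ∈ s, α i := by
  have h := Finset.prod_X_add_C_coeff I (fun i => - α i) (Nat.sub_le I.card r)
  simp only [map_neg, ← sub_eq_add_neg] at h
  rw [h, Nat.sub_sub_self hr, Finset.mul_sum]
  refine Finset.sum_congr rfl fun s hs => ?_
  rw [Finset.prod_neg, (Finset.mem_powersetCard.1 hs).2]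

theorem esymm_insert {F : Type*} [Field F] {n : ℕ} (α : Fin n → F) (J : Finset (Fin n)) (b : Fin n)
    (hb : b ∉ J) (r : ℕ) :
    ∑ s ∈ (insert b J).powersetCard (r + 1), ∏ i ∈ s, α i =
      ∑ s ∈ J.powersetCard (r + 1), ∏ i ∈ s, α i
        + α b * ∑ s ∈ J.powersetCard r, ∏ i ∈ s, α i := by
  have hm : ∀ s ∈ J.powersetCard r, b ∉ s := fun s hs h =>
    hb ((Finset.mem_powersetCard.1 hs).1 h)
  rw [Finset.powersetCard_succ_insert hb, Finset.sum_union, Finset.sum_image, Finset.mul_sum]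
  · congr 1
    exact Finset.sum_congr rfl fun s hs => Finset.prod_insert (hm s hs)
  · intro s hs t ht h
    rw [← Finset.erase_insert (hm s hs), ← Finset.erase_insert (hm t ht), h]
  · rw [Finset.disjoint_left]
    intro s hs hs'
    obtain ⟨t, _, rfl⟩ := Finset.mem_image.1 hs'
    exact hb ((Finset.mem_powersetCard.1 hs).1 (Finset.mem_insert_self b t))

theorem Sk2t_subset_Sk2 {F : Type*} [Field F] {n : ℕ} (k : ℕ) (α : Fin n → F) :
    Sk2t k α ⊆ Sk2 k α := by
  rintro x ⟨I, hI, h0, rfl⟩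
  obtain ⟨b, J, hb, rfl, hJ⟩ := Finset.card_eq_succ.1 hI
  refine ⟨J, hJ, ?_⟩
  rw [Finset.sum_insert hb] at h0
  rw [esymm_insert α J b hb 2]
  linear_combination (-∑ s ∈ J.powersetCard 2, ∏ i ∈ s, α i) * h0

theorem card_zeros_le {F : Type*} [Field F] [DecidableEq F] {n : ℕ} {α : Fin n → F}
    (hα : Function.Injective α) (p : Polynomial F) (hp : p ≠ 0) :
    (Finset.univ.filter fun i => p.eval (α i) = 0).card ≤ p.natDegree := by
  by_contra! h
  refine hp (eq_zero_of_natDegree_lt_card_of_eval_eq_zero' p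
    ((Finset.univ.filter fun i => p.eval (α i) = 0).image α) ?_ ?_)
  · intro x hx
    obtain ⟨i, hi, rfl⟩ := Finset.mem_image.1 hx
    exact (Finset.mem_filter.1 hi).2
  · rwa [Finset.card_image_of_injective _ hα]

theorem hwt_add_zeros {F : Type*} [Field F] [DecidableEq F] {n : ℕ} (c : Fin n → F) :
    hwt c + (Finset.univ.filter fun i => c i = 0).card = n := by
  have h : hwt c = (Finset.univ.filter fun i => ¬ c i = 0).card := by
    rw [hwt, ← Set.ncard_coe_finset]
    simp
  rw [h, add_comm, Finset.card_filter_add_card_filter_not]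
  simp

/-- Encoding of a message `a : Fin k → F` (padded by zeros) as a codeword. -/
noncomputable def encode {F : Type*} [Field F] {n : ℕ} (k : ℕ) (η : F) (α v : Fin n → F) :
    (Fin k → F) →ₗ[F] (Fin n → F) where
  toFun a i := v i *
    (twistedPoly k 2 (k - 2) η fun j => if h : j < k then a ⟨j, h⟩ else 0).eval (α i)
  map_add' a b := by
    ext i
    simp only [Pi.add_apply, ← mul_add, ← eval_add]
    congr 2
    simp only [twistedPoly]
    rw [add_add_add_comm, ← Finset.sum_add_distrib]
    congr 1
    · refine Finset.sum_congr rfl fun j hj => ?_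
      rw [← add_mul, ← C_add]
      split_ifs <;> simp
    · rw [← add_mul, ← C_add]
      split_ifs <;> simp [mul_add]
  map_smul' r a := by
    ext i
    simp only [Pi.smul_apply, smul_eq_mul, RingHom.id_apply]
    rw [mul_left_comm r (v i), ← eval_C_mul (a := r)]
    congr 2
    simp only [twistedPoly, mul_add, Finset.mul_sum, ← mul_assoc, ← C_mul]
    congr 1
    · refine Finset.sum_congr rfl fun j hj => ?_
      split_ifs <;> simp
    · split_ifs <;> simp [mul_left_comm, mul_assoc]

theorem TGRS_eq_range {F : Type*} [Field F] {n k : ℕ} (hk : 2 ≤ k) (η : F) (α v : Fin n → F) :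
    TGRS n k 2 (k - 2) η α v = (LinearMap.range (encode k η α v) : Set (Fin n → F)) := by
  ext c
  constructor
  · rintro ⟨a, ha⟩
    refine ⟨fun j => a j, ?_⟩
    ext i
    rw [ha i]
    simp only [encode, LinearMap.coe_mk, AddHom.coe_mk]
    congr 2
    ext j
    rw [twistedPoly_coeff hk, twistedPoly_coeff hk]
    have : k - 2 < k := by omega
    by_cases h : j < k <;> simp [h, this]
  · rintro ⟨a, rfl⟩
    exact ⟨_, fun i => rfl⟩

theorem encode_injective {F : Type*} [Field F] {n k : ℕ} (hk : 2 ≤ k) (hkn : k + 2 ≤ n) (η : F)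
    (α v : Fin n → F) (hα : Function.Injective α) (hv : ∀ i, v i ≠ 0) :
    Function.Injective (encode k η α v) := by
  classical
  rw [injective_iff_map_eq_zero]
  intro a ha
  set b : ℕ → F := fun j => if h : j < k then a ⟨j, h⟩ else 0 with hb
  have hz : ∀ i, (twistedPoly k 2 (k - 2) η b).eval (α i) = 0 := fun i =>
    (mul_eq_zero.1 (congrFun ha i)).resolve_left (hv i)
  have hp : twistedPoly k 2 (k - 2) η b = 0 := by
    by_contra hp
    have h1 := card_zeros_le hα _ hp
    have h2 := twistedPoly_natDegree hk η b
    simp only [hz, Finset.filter_true, Finset.card_univ, Fintype.card_fin] at h1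
    omega
  ext j
  have h := twistedPoly_coeff hk η b j
  rw [hp, if_pos j.2] at h
  simpa [hb] using h.symm

theorem finrank_TGRS {F : Type*} [Field F] {n k : ℕ} (hk : 2 ≤ k) (hkn : k + 2 ≤ n) (η : F)
    (α v : Fin n → F) (hα : Function.Injective α) (hv : ∀ i, v i ≠ 0) :
    Module.finrank F (Submodule.span F (TGRS n k 2 (k - 2) η α v)) = k := by
  rw [TGRS_eq_range hk, Submodule.span_eq,
    LinearMap.finrank_range_of_inj (encode_injective hk hkn η α v hα hv)]
  simp

/-- Nonzero codewords have weight at least `n - k - 1`. -/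
theorem le_hwt {F : Type*} [Field F] {n k : ℕ} (hk : 2 ≤ k) (η : F)
    (α v : Fin n → F) (hα : Function.Injective α) (hv : ∀ i, v i ≠ 0)
    (c : Fin n → F) (hc : c ∈ TGRS n k 2 (k - 2) η α v) (h0 : c ≠ 0) :
    n ≤ hwt c + (k + 1) := by
  classical
  obtain ⟨a, ha⟩ := hc
  have hp : twistedPoly k 2 (k - 2) η a ≠ 0 := by
    intro hp
    apply h0
    ext i
    simp [ha i, hp]
  have h1 := card_zeros_le hα _ hp
  have h2 := twistedPoly_natDegree hk η a
  have h3 := hwt_add_zeros c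
  simp only [ha, mul_eq_zero, hv, false_or] at h3
  omega

/-- Codewords of weight `n - k - 1` exist exactly when `η⁻¹ ∈ S̃_k(2,α)`. -/
theorem exists_weight_iff {F : Type*} [Field F] {n k : ℕ} (hk : 2 ≤ k) (hkn : k + 2 ≤ n) (η : F)
    (hη : η ≠ 0) (α v : Fin n → F) (hα : Function.Injective α) (hv : ∀ i, v i ≠ 0) :
    (∃ c ∈ TGRS n k 2 (k - 2) η α v, c ≠ 0 ∧ hwt c = n - (k + 1)) ↔ η⁻¹ ∈ Sk2t k α := by
  classical
  have key : ∀ I : Finset (Fin n), I.card = k + 1 →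
      (∏ i ∈ I, (X - C (α i))).coeff k = - ∑ i ∈ I, α i ∧
      (∏ i ∈ I, (X - C (α i))).coeff (k - 2) = - ∑ s ∈ I.powersetCard 3, ∏ i ∈ s, α i := by
    intro I hI
    have h1 := coeff_prod_sub α I 1 (by omega)
    have h3 := coeff_prod_sub α I 3 (by omega)
    rw [show I.card - 1 = k by omega] at h1
    rw [show I.card - 3 = k - 2 by omega] at h3
    constructor
    · rw [h1]
      simp [Finset.powersetCard_one]
    · rw [h3]
      ring
  constructor
  · rintro ⟨c, ⟨a, ha⟩, hc0, hw⟩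
    set p := twistedPoly k 2 (k - 2) η a with hp
    set I := Finset.univ.filter fun i => c i = 0 with hIdef
    have hI : I.card = k + 1 := by
      have := hwt_add_zeros c
      rw [← hIdef] at this
      omega
    have hpe := eq_C_mul_prod hα p I (hI ▸ twistedPoly_natDegree hk η a) (by
      intro i hi
      have := (Finset.mem_filter.1 hi).2
      rw [ha i] at this
      exact (mul_eq_zero.1 this).resolve_left (hv i))
    rw [hI] at hpe
    have hl : p.coeff (k + 1) ≠ 0 := by
      intro h
      rw [h, C_0, zero_mul] at hpe
      apply hc0
      ext i
      simp [ha i, hpe]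
    obtain ⟨k1, k3⟩ := key I hI
    have e1 : p.coeff k = 0 := by
      rw [hp, twistedPoly_coeff hk, if_neg (by omega), if_neg (by omega)]
    have e2 : p.coeff (k + 1) = η * p.coeff (k - 2) := by
      rw [hp, twistedPoly_coeff hk, twistedPoly_coeff hk, if_neg (by omega), if_pos rfl,
        if_pos (by omega)]
    have f1 := congrArg (fun r => r.coeff k) hpe
    have f3 := congrArg (fun r => r.coeff (k - 2)) hpe
    simp only [coeff_C_mul, k1, k3, e1] at f1 f3
    refine ⟨I, hI, ?_, ?_⟩
    · rcases mul_eq_zero.1 f1.symm with h | h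
      · exact absurd h hl
      · exact neg_eq_zero.1 h
    · rw [f3] at e2
      apply mul_left_cancel₀ hl
      rw [← f3]
      apply mul_left_cancel₀ hη
      rw [f3, ← e2]
      field_simp
  · rintro ⟨I, hI, h0, hx⟩
    obtain ⟨k1, k3⟩ := key I hI
    set P := ∏ i ∈ I, (X - C (α i)) with hP
    have hm : P.Monic := monic_prod_of_monic _ _ fun i _ => monic_X_sub_C _
    have hn : P.natDegree = k + 1 := by simp [hP, hI]
    have ht : twistedPoly k 2 (k - 2) η (fun j => P.coeff j) = P := by
      ext j
      rw [twistedPoly_coeff hk]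
      split_ifs with h1 h2
      · rfl
      · rw [k3, ← hx, h2, ← hn, hm.coeff_natDegree, mul_inv_cancel₀ hη]
      · by_cases h : j = k
        · rw [h, k1, h0, neg_zero]
        · rw [coeff_eq_zero_of_natDegree_lt (by omega)]
    have hzero : ∀ i, v i * P.eval (α i) = 0 ↔ i ∈ I := by
      intro i
      rw [mul_eq_zero, or_iff_right (hv i), hP, eval_prod, Finset.prod_eq_zero_iff]
      constructor
      · rintro ⟨j, hj, h⟩
        simp only [eval_sub, eval_X, eval_C, sub_eq_zero] at h
        exact hα h ▸ hj
      · exact fun h => ⟨i, h, by simp⟩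
    have hw := hwt_add_zeros (fun i => v i * P.eval (α i))
    simp only [hzero, Finset.filter_univ_mem, hI] at hw
    refine ⟨fun i => v i * P.eval (α i), ⟨fun j => P.coeff j, fun i => by rw [ht]⟩, ?_, by omega⟩
    intro h
    rw [h] at hw
    simp only [hwt, Pi.zero_apply, ne_eq, not_true_eq_false, Set.ofPred_false, Set.ncard_empty] at hw
    omega

/-- `C_{k,n}(α,v,2,k-2,η)` has Singleton defect 2 iff
`η⁻¹ ∈ S_k(2,α) ∩ S̃_k(2,α)`. -/
theorem stmt4 {F : Type*} [Field F] [Fintype F] (q n k : ℕ)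
    (hq : Fintype.card F = q) (hk : 2 ≤ k) (hkn : k + 2 ≤ n) (hnq : n ≤ q)
    (η : F) (hη : η ≠ 0) (α v : Fin n → F)
    (hα : Function.Injective α) (hv : ∀ i, v i ≠ 0) :
    sdefect (TGRS n k 2 (k - 2) η α v) = 2 ↔ η⁻¹ ∈ Sk2 k α ∩ Sk2t k α := by
  rw [Set.inter_eq_right.2 (Sk2t_subset_Sk2 k α), ← exists_weight_iff hk hkn η hη α v hα hv,
    sdefect, finrank_TGRS hk hkn η α v hα hv]
  have hd : (n : ℤ) + 1 - (k : ℤ) - (minDist (TGRS n k 2 (k - 2) η α v) : ℤ) = 2 ↔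
      minDist (TGRS n k 2 (k - 2) η α v) = n - (k + 1) := by omega
  rw [hd]
  constructor
  · intro h
    -- The infimum is positive, hence not the junk value of the empty set, and is attained.
    have hne : { d | ∃ c ∈ TGRS n k 2 (k - 2) η α v, c ≠ 0 ∧ hwt c = d }.Nonempty := by
      apply Nat.nonempty_of_pos_sInf
      change 0 < minDist _
      omega
    have := Nat.sInf_mem hne
    change minDist _ ∈ _ at this
    rwa [h] at this
  · intro h
    refine le_antisymm (Nat.sInf_le h) (le_csInf ⟨_, h⟩ ?_)
    rintro d ⟨c, hc, h0, rfl⟩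
    have := le_hwt hk η α v hα hv c hc h0
    omega
end

section
/- Let q be a prime power, let α_1,…,α_n ∈ 𝔽_q be pairwise distinct, and let 1 ≤ s ≤ n be an integer. With u_i = ∏_{j≠i}(α_i−α_j)^{−1}, L_m = Σ_{l=1}^n u_l α_l^{n−1+m}, and a_j defined by ∏_{l=1}^n (x−α_l) = x^n + Σ_{j=0}^{n−1} a_j x^j, the following are equivalent: L_1 = L_2 = ⋯ = L_{s−1} = 0 if and only if a_{n−1} = a_{n−2} = ⋯ = a_{n−(s−1)} = 0. -/
/-!
Write `S_k = ∑ u_l α_l ^ k`, so that `L_m = S_{n-1+m}`. The `u_l` are the Lagrange leading-coefficient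
weights, hence `S_k = 0` for `k < n - 1` and `S_{n-1} = 1`, that is, `L_0 = 1`. Since
`P = ∏ (x - α_l)` vanishes at every node, `∑ u_l α_l ^ (m-1) P(α_l) = 0` for `m ≥ 1`; expanding `P`
in coefficients gives the convolution identity `∑_{i ≤ m} a_{n-i} L_{m-i} = 0` for `1 ≤ m ≤ n`
(`sum_coeff_mul_moment_eq_zero`), with `a_n = L_0 = 1`. So, up to degree `n`, the two sequences
are inverse power series with constant term `1`, and the positive-degree coefficients of one vanish up
to a given degree exactly when those of the other do (`convolution_inverse_vanishing`).
-/

open Polynomial Finset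

/-- If two sequences with constant term `1` are inverse to each other under convolution up to
degree `N`, and one vanishes in degrees `1, …, N`, so does the other. -/
lemma convolution_inverse_vanishing {F : Type*} [Field F] (N : ℕ) (b L : ℕ → F)
    (hL0 : L 0 = 1)
    (h : ∀ m ∈ Finset.Icc 1 N, ∑ i ∈ Finset.range (m + 1), b i * L (m - i) = 0)
    (hL : ∀ m ∈ Finset.Icc 1 N, L m = 0) : ∀ m ∈ Finset.Icc 1 N, b m = 0 := by
  intro m hm
  have hsum := h m hm
  rw [Finset.mem_Icc] at hm
  rw [Finset.sum_range_succ, Finset.sum_eq_zero, Nat.sub_self, hL0] at hsum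
  · simpa using hsum
  · intro i hi
    rw [Finset.mem_range] at hi
    rw [hL (m - i) (Finset.mem_Icc.2 ⟨by omega, by omega⟩), mul_zero]

/-- The weights `u` extract the coefficient of `X ^ (n - 1)` from polynomials of degree below `n`;
this is the case of a monomial. -/
lemma weighted_power_sum {F : Type*} [Field F] {n : ℕ}
    (α : Fin n → F) (hα : Function.Injective α)
    (u : Fin n → F) (hu : ∀ i, u i = (∏ j ∈ Finset.univ.erase i, (α i - α j))⁻¹)
    (k : ℕ) (hk : k < n) :
    ∑ l, u l * α l ^ k = if n - 1 = k then 1 else 0 := by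
  have hdeg : (X ^ k : F[X]).degree < #(Finset.univ : Finset (Fin n)) := by
    rw [degree_X_pow, Finset.card_univ, Fintype.card_fin]
    exact_mod_cast hk
  have h := Lagrange.coeff_eq_sum (v := α) hα.injOn hdeg
  rw [Finset.card_univ, Fintype.card_fin, coeff_X_pow] at h
  rw [h]
  refine Finset.sum_congr rfl fun l _ => ?_
  rw [hu, eval_pow, eval_X, div_eq_mul_inv, mul_comm]

/-- The convolution identity between the coefficients of `∏ (X - α l)`, read from the top, and the
moments `L`. -/
lemma sum_coeff_mul_moment_eq_zero {F : Type*} [Field F] {n : ℕ}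
    (α : Fin n → F) (hα : Function.Injective α)
    (u : Fin n → F) (hu : ∀ i, u i = (∏ j ∈ Finset.univ.erase i, (α i - α j))⁻¹)
    (m : ℕ) (hm : 1 ≤ m) (hmn : m ≤ n) :
    ∑ i ∈ Finset.range (m + 1), (∏ l, (X - C (α l))).coeff (n - i) *
      ∑ l, u l * α l ^ (n - 1 + (m - i)) = 0 := by
  set P : F[X] := ∏ l, (X - C (α l)) with hP
  have hPdeg : P.natDegree < n + 1 := by
    rw [hP, natDegree_prod_of_monic _ _ fun i _ => monic_X_sub_C _]
    simp
  have hroot : ∀ l, ∑ j ∈ Finset.range (n + 1), P.coeff j * α l ^ j = 0 := by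
    intro l
    rw [← eval_eq_sum_range' hPdeg, hP, eval_prod]
    exact Finset.prod_eq_zero (Finset.mem_univ l) (by simp)
  have hfull : ∑ j ∈ Finset.range (n + 1), P.coeff j * ∑ l, u l * α l ^ (j + (m - 1)) = 0 := by
    simp_rw [Finset.mul_sum]
    rw [Finset.sum_comm]
    refine Finset.sum_eq_zero fun l _ => ?_
    calc _ = u l * α l ^ (m - 1) * ∑ j ∈ Finset.range (n + 1), P.coeff j * α l ^ j := by
          rw [Finset.mul_sum]
          exact Finset.sum_congr rfl fun j _ => by ring
      _ = 0 := by rw [hroot, mul_zero]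
  rw [← Finset.sum_range_reflect] at hfull
  -- After reflection, the indices `i > m` carry an exponent below `n - 1` and contribute nothing.
  rw [← hfull]
  refine Finset.sum_subset_zero_on_sdiff (Finset.range_subset_range.2 (by omega)) ?_ ?_
  · intro i hi
    rw [Finset.mem_sdiff, Finset.mem_range, Finset.mem_range] at hi
    rw [weighted_power_sum α hα u hu _ (by omega), if_neg (by omega), mul_zero]
  · intro i hi
    rw [Finset.mem_range] at hi
    rw [show n + 1 - 1 - i = n - i by omega, show n - i + (m - 1) = n - 1 + (m - i) by omega]

/-- `L_1 = ⋯ = L_{s-1} = 0` iff `a_{n-1} = ⋯ = a_{n-(s-1)} = 0`. -/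
theorem stmt7 {F : Type*} [Field F] [Fintype F] (q n s : ℕ)
    (hq : Fintype.card F = q) (hs : 1 ≤ s) (hsn : s ≤ n)
    (α : Fin n → F) (hα : Function.Injective α)
    (u : Fin n → F) (hu : ∀ i, u i = (∏ j ∈ Finset.univ.erase i, (α i - α j))⁻¹)
    (L : ℕ → F) (hL : ∀ m, L m = ∑ l, u l * α l ^ (n - 1 + m))
    (a : ℕ → F)
    (ha : ∀ j, a j = (∏ l, (Polynomial.X - Polynomial.C (α l))).coeff j) :
    (∀ m ∈ Finset.Icc 1 (s - 1), L m = 0) ↔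
      (∀ m ∈ Finset.Icc 1 (s - 1), a (n - m) = 0) := by
  have hL0 : L 0 = 1 := by
    rw [hL, weighted_power_sum α hα u hu _ (by omega), if_pos (by omega)]
  have ha0 : a (n - 0) = 1 := by
    have hmonic : (∏ l, (X - C (α l))).Monic := monic_prod_of_monic _ _ fun i _ => monic_X_sub_C _
    have hdeg : (∏ l, (X - C (α l))).natDegree = n := by
      rw [natDegree_prod_of_monic _ _ fun i _ => monic_X_sub_C _]
      simp
    have hcoeff := hmonic.coeff_natDegree
    rw [hdeg] at hcoeff
    rw [ha, Nat.sub_zero, hcoeff]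
  have hconv : ∀ m ∈ Finset.Icc 1 (s - 1),
      ∑ i ∈ Finset.range (m + 1), a (n - i) * L (m - i) = 0 := by
    intro m hm
    rw [Finset.mem_Icc] at hm
    simp_rw [ha, hL]
    exact sum_coeff_mul_moment_eq_zero α hα u hu m hm.1 (by omega)
  refine ⟨convolution_inverse_vanishing (s - 1) (fun i => a (n - i)) L hL0 hconv,
    convolution_inverse_vanishing (s - 1) L (fun i => a (n - i)) ha0 fun m hm => ?_⟩
  -- The convolution is symmetric under `i ↦ m - i`.
  rw [← hconv m hm, ← Finset.sum_range_reflect]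
  refine Finset.sum_congr rfl fun i hi => ?_
  rw [Finset.mem_range] at hi
  rw [show m + 1 - 1 - i = m - i by omega, show m - (m - i) = i by omega, mul_comm]
end

section
/- Let q be a prime power, let α_1,…,α_n ∈ 𝔽_q be pairwise distinct, and let s ≥ 1 be an integer with 2s−1 ≤ n. With u_i = ∏_{j≠i}(α_i−α_j)^{−1}, L_m = Σ_{l=1}^n u_l α_l^{n−1+m}, and a_j defined by ∏_{l=1}^n (x−α_l) = x^n + Σ_{j=0}^{n−1} a_j x^j, if L_1 = L_2 = ⋯ = L_{s−1} = 0, then L_{2s−1} = −a_{n−(2s−1)}. -/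
/-!
Write `P = ∏ l, (X - α l)` and `S e = ∑ l, u l * α l ^ e`. Lagrange interpolation on the nodes `α`
says that `S e` is the coefficient of `X ^ (n - 1)` in `X ^ e` for `e ≤ n - 1`, so `S e = 0` for
`e < n - 1` and `S (n - 1) = 1` (`moment_eq_ite`). Since every `α l` is a root of `P`, the sequence
`S` satisfies the linear recurrence with characteristic polynomial `P`. For `L m = S (n - 1 + m)`
this becomes the Newton-type identity `L m + ∑ 0 < i < m, a (n - i) * L (m - i) + a (n - m) = 0`
for `1 ≤ m ≤ n` (`newton_identity`).

If `L 1 = ⋯ = L (s - 1) = 0`, the identity for `m < s` gives `a (n - m) = 0`. In the identity for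
`m = 2 * s - 1` every product `a (n - i) * L (m - i)` then vanishes: either `i < s` or `m - i < s`.
-/

open Polynomial Finset

/-- The moments of order at most `n - 1` of the barycentric weights. -/
lemma moment_eq_ite {F : Type*} [Field F] {n : ℕ} {α : Fin n → F}
    (hα : Function.Injective α) {e : ℕ} (he : e < n) :
    ∑ l, (∏ j ∈ Finset.univ.erase l, (α l - α j))⁻¹ * α l ^ e = if e = n - 1 then 1 else 0 := by
  have h := Lagrange.coeff_eq_sum (s := (Finset.univ : Finset (Fin n))) (v := α) hα.injOn
    (P := (X : F[X]) ^ e) (by rw [degree_X_pow]; simpa using he)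
  rw [coeff_X_pow] at h
  simp only [Finset.card_univ, Fintype.card_fin, eval_pow, eval_X] at h
  simp only [eq_comm (a := e)]
  rw [h]
  exact Finset.sum_congr rfl fun l _ => by rw [div_eq_mul_inv, mul_comm]

/-- The coefficients of `∏ l, (X - α l)` against the higher moments of the barycentric weights:
the degree-`m` part of `(∑ L_m t^m) * (∏ l, (1 - α l * t)) = 1`. -/
lemma newton_identity {F : Type*} [Field F] {n : ℕ} {α : Fin n → F}
    (hα : Function.Injective α) {u : Fin n → F}
    (hu : ∀ i, u i = (∏ j ∈ Finset.univ.erase i, (α i - α j))⁻¹)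
    {L : ℕ → F} (hL : ∀ m, L m = ∑ l, u l * α l ^ (n - 1 + m))
    {a : ℕ → F} (ha : ∀ j, a j = (∏ l, (X - C (α l))).coeff j)
    {m : ℕ} (hm : 1 ≤ m) (hmn : m ≤ n) :
    L m + ∑ i ∈ Finset.Ico 1 m, a (n - i) * L (m - i) + a (n - m) = 0 := by
  set P : F[X] := ∏ l, (X - C (α l)) with hP
  have hdeg : P.natDegree = n := by simp [hP]
  have hmonic : P.Monic := monic_prod_of_monic _ _ fun l _ => monic_X_sub_C _
  have han : a n = 1 := by rw [ha, ← hdeg]; exact hmonic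
  have hlow : ∀ e, e < n → ∑ l, u l * α l ^ e = if e = n - 1 then 1 else 0 := fun e he => by
    simp only [hu]; exact moment_eq_ite hα he
  have hroot : ∀ l, ∑ j ∈ Finset.range (n + 1), a j * α l ^ j = 0 := fun l => by
    have h0 : P.eval (α l) = 0 := by
      rw [hP, eval_prod]
      exact Finset.prod_eq_zero (Finset.mem_univ l) (by simp)
    rw [eval_eq_sum_range, hdeg] at h0
    simpa only [ha] using h0
  have hL0 : L 0 = 1 := by rw [hL, Nat.add_zero, hlow _ (by omega), if_pos rfl]
  -- The linear recurrence for the moments, summed from the top coefficient of `P` downwards.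
  have hrec : ∑ i ∈ Finset.range (n + 1), a (n - i) * ∑ l, u l * α l ^ (m - 1 + (n - i)) = 0 := by
    have h := Finset.sum_range_reflect (fun j => a j * ∑ l, u l * α l ^ (m - 1 + j)) (n + 1)
    simp only [Nat.add_sub_cancel] at h
    rw [h]
    simp only [Finset.mul_sum]
    rw [Finset.sum_comm]
    refine Finset.sum_eq_zero fun l _ => ?_
    calc _ = u l * α l ^ (m - 1) * ∑ j ∈ Finset.range (n + 1), a j * α l ^ j := by
          rw [Finset.mul_sum]
          exact Finset.sum_congr rfl fun j _ => by ring
      _ = 0 := by rw [hroot, mul_zero]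
  -- The terms with `i > m` are moments of order less than `n - 1`.
  have htrunc : ∑ i ∈ Finset.range (m + 1), a (n - i) * L (m - i) = 0 := by
    rw [← hrec]
    refine Finset.sum_subset_zero_on_sdiff (Finset.range_mono (by omega)) ?_ ?_
    · intro i hi
      simp only [Finset.mem_sdiff, Finset.mem_range] at hi
      rw [hlow _ (by omega), if_neg (by omega), mul_zero]
    · intro i hi
      rw [Finset.mem_range] at hi
      rw [hL, show n - 1 + (m - i) = m - 1 + (n - i) by omega]
  rw [Finset.sum_range_succ, Finset.range_eq_Ico, Finset.sum_eq_sum_Ico_succ_bot (by omega)]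
    at htrunc
  simpa [han, hL0] using htrunc

/-- if `L_1 = ⋯ = L_{s-1} = 0`, then `L_{2s-1} = -a_{n-(2s-1)}`. -/
theorem stmt8 {F : Type*} [Field F] [Fintype F] (q n s : ℕ)
    (hq : Fintype.card F = q) (hs : 1 ≤ s) (hsn : 2 * s - 1 ≤ n)
    (α : Fin n → F) (hα : Function.Injective α)
    (u : Fin n → F) (hu : ∀ i, u i = (∏ j ∈ Finset.univ.erase i, (α i - α j))⁻¹)
    (L : ℕ → F) (hL : ∀ m, L m = ∑ l, u l * α l ^ (n - 1 + m))
    (a : ℕ → F)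
    (ha : ∀ j, a j = (∏ l, (Polynomial.X - Polynomial.C (α l))).coeff j)
    (hL0 : ∀ m ∈ Finset.Icc 1 (s - 1), L m = 0) :
    L (2 * s - 1) = -a (n - (2 * s - 1)) := by
  have key : ∀ m, 1 ≤ m → m ≤ n →
      L m + ∑ i ∈ Finset.Ico 1 m, a (n - i) * L (m - i) + a (n - m) = 0 :=
    fun m h1 h2 => newton_identity hα hu hL ha h1 h2
  have hLz : ∀ m, 1 ≤ m → m < s → L m = 0 := fun m h1 h2 =>
    hL0 m (Finset.mem_Icc.2 ⟨h1, by omega⟩)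
  have haz : ∀ m, 1 ≤ m → m < s → a (n - m) = 0 := fun m h1 h2 => by
    have h := key m h1 (by omega)
    rw [hLz m h1 h2, Finset.sum_eq_zero, zero_add, zero_add] at h
    · exact h
    · intro i hi
      rw [Finset.mem_Ico] at hi
      rw [hLz (m - i) (by omega) (by omega), mul_zero]
  have h := key (2 * s - 1) (by omega) hsn
  rw [Finset.sum_eq_zero, add_zero] at h
  · exact eq_neg_of_add_eq_zero_left h
  · intro i hi
    rw [Finset.mem_Ico] at hi
    rcases lt_or_ge i s with his | his
    · rw [haz i hi.1 his, zero_mul]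
    · rw [hLz (2 * s - 1 - i) (by omega) (by omega), mul_zero]
end

section
/- Let q be a prime power and let n, k, t, h be integers with n = 2k, k ≥ 4, t ≥ 1, 0 ≤ h < k, h + t = k, k−1+t ≤ n ≤ q, and let η ∈ 𝔽_q*. Let α_1,…,α_n ∈ 𝔽_q be pairwise distinct and v ∈ (𝔽_q*)^n, and let u_i and a_j be as in the context. If (1) there exists λ ∈ 𝔽_q* such that v_i² = λ u_i for all 1 ≤ i ≤ n, and (2) a_{n−m} = 0 for m = 1,…,t−1 and 2 − η a_{n−(2t−1)} = 0, then the TGRS code C_{k,n}(α,v,t,h,η) is self-dual. -/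
/-!
The power sums `S m = ∑ i, u i * α i ^ m` weighted by the Lagrange weights `u i` carry the whole
argument. By Lagrange interpolation, `S m = 0` for `m < n - 1` and `S (n - 1) = 1`, and since each
`α i` is a root of the nodal polynomial `∏ (X - α l)`, the sequence `S` satisfies the linear
recurrence with coefficients `a j` (`powerSum_rec`). If `a (n - 1), …, a (n - t + 1)` vanish, the
recurrence gives `S (n - 1 + e) = 0` for `1 ≤ e < t` and
`S (n - 1 + (2 * t - 1)) = -a (n - (2 * t - 1))`.

The code is spanned by the evaluations of the `k` polynomials `x ^ j` (`j ≠ h`) and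
`x ^ h + η * x ^ (k - 1 + t)`. As `v i ^ 2 = lam * u i`, their pairwise inner products are
combinations of values of `S`. All of them vanish for degree reasons or by the above, except that
the product of the twisted generator with itself is
`lam * η * (2 - η * a (n - (2 * t - 1)))`, which vanishes by hypothesis. So the code is contained
in its dual. All polynomials involved have degree `< n`, so evaluation is injective and the code
has dimension `k = n / 2`; a self-orthogonal subspace of half dimension is its own orthogonal
complement (`mem_of_orthogonal_of_half_dim`).
-/

open Polynomial Finset

/-! ### Power sums weighted by the Lagrange weights -/

section WeightedPowerSums

variable {F : Type*} [Field F] {n : ℕ}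

/-- The power sum `∑ i, u i * α i ^ m` with weights `u`. -/
def wPowerSum (u α : Fin n → F) (m : ℕ) : F := ∑ i, u i * α i ^ m

/-- Lagrange interpolation of `X ^ m`: the weighted power sum reads off the coefficient of
`X ^ (n - 1)`. -/
theorem wPowerSum_low {u α : Fin n → F} (hα : Function.Injective α)
    (hu : ∀ i, u i = (∏ j ∈ Finset.univ.erase i, (α i - α j))⁻¹) {m : ℕ} (hm : m < n) :
    wPowerSum u α m = if m = n - 1 then 1 else 0 := by
  have h := Lagrange.coeff_eq_sum (s := Finset.univ) (v := α) hα.injOn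
    (P := (X : F[X]) ^ m) (by rw [degree_X_pow]; simpa using hm)
  rw [coeff_X_pow] at h
  simp only [Finset.card_univ, Fintype.card_fin, eval_pow, eval_X] at h
  rw [wPowerSum]
  simp only [eq_comm (a := m), h, hu]
  exact Finset.sum_congr rfl fun i _ => by rw [div_eq_mul_inv, mul_comm]

/-- The power sums satisfy the linear recurrence whose characteristic polynomial is the nodal
polynomial; this holds for any weights. -/
theorem powerSum_rec (u α : Fin n → F) (m : ℕ) :
    wPowerSum u α (m + n) =
      -∑ j ∈ Finset.range n, (∏ l, (X - C (α l))).coeff j * wPowerSum u α (m + j) := by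
  have hmonic : (∏ l, (X - C (α l)) : F[X]).Monic := monic_prod_X_sub_C _ _
  have hdeg : (∏ l, (X - C (α l)) : F[X]).natDegree = n := by
    rw [natDegree_prod_of_monic _ _ fun i _ => monic_X_sub_C _]; simp
  have hroot : ∀ i, α i ^ n =
      -∑ j ∈ Finset.range n, (∏ l, (X - C (α l))).coeff j * α i ^ j := by
    intro i
    have h0 : (∏ l, (X - C (α l)) : F[X]).eval (α i) = 0 := by
      rw [eval_prod]
      exact Finset.prod_eq_zero (Finset.mem_univ i) (by simp)
    rw [eval_eq_sum_range, hdeg, Finset.sum_range_succ] at h0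
    have hc : (∏ l, (X - C (α l)) : F[X]).coeff n = 1 := by
      have := hmonic.coeff_natDegree
      rwa [hdeg] at this
    rw [hc, one_mul] at h0
    exact eq_neg_of_add_eq_zero_right h0
  simp only [wPowerSum, Finset.mul_sum]
  rw [Finset.sum_comm, ← Finset.sum_neg_distrib]
  refine Finset.sum_congr rfl fun i _ => ?_
  rw [pow_add, hroot i, mul_neg, mul_neg, Finset.mul_sum, Finset.mul_sum]
  refine congrArg _ (Finset.sum_congr rfl fun j _ => ?_)
  rw [pow_add]; ring

variable {u α : Fin n → F} {t : ℕ}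

theorem wPowerSum_mid (hα : Function.Injective α)
    (hu : ∀ i, u i = (∏ j ∈ Finset.univ.erase i, (α i - α j))⁻¹)
    (h2 : ∀ m ∈ Finset.Icc 1 (t - 1), (∏ l, (X - C (α l))).coeff (n - m) = 0)
    (htn : t ≤ n) {e : ℕ} (he : 1 ≤ e) (het : e < t) :
    wPowerSum u α (n - 1 + e) = 0 := by
  rw [show n - 1 + e = (e - 1) + n by omega, powerSum_rec, neg_eq_zero]
  refine Finset.sum_eq_zero fun j hj => ?_
  have hj := Finset.mem_range.1 hj
  by_cases hlow : e - 1 + j < n - 1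
  · rw [wPowerSum_low hα hu (by omega), if_neg (by omega), mul_zero]
  · have := h2 (n - j) (Finset.mem_Icc.2 (by omega))
    rw [show n - (n - j) = j by omega] at this
    rw [this, zero_mul]

theorem wPowerSum_top (hα : Function.Injective α)
    (hu : ∀ i, u i = (∏ j ∈ Finset.univ.erase i, (α i - α j))⁻¹)
    (h2 : ∀ m ∈ Finset.Icc 1 (t - 1), (∏ l, (X - C (α l))).coeff (n - m) = 0)
    (ht : 1 ≤ t) (htn : 2 * t ≤ n) :
    wPowerSum u α (n - 1 + (2 * t - 1)) =
      -(∏ l, (X - C (α l))).coeff (n - (2 * t - 1)) := by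
  rw [show n - 1 + (2 * t - 1) = (2 * t - 2) + n by omega, powerSum_rec, neg_inj]
  rw [Finset.sum_eq_single (n - (2 * t - 1))]
  · rw [wPowerSum_low hα hu (by omega), if_pos (by omega), mul_one]
  · intro j hj hne
    have hj := Finset.mem_range.1 hj
    by_cases hlow : 2 * t - 2 + j < n - 1
    · rw [wPowerSum_low hα hu (by omega), if_neg (by omega), mul_zero]
    · by_cases hmid : j ≤ n - t
      -- here the index of the power sum is `n - 1 + e` with `1 ≤ e < t`
      · rw [show 2 * t - 2 + j = n - 1 + (2 * t - 1 + j - n) by omega,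
          wPowerSum_mid hα hu h2 (by omega) (by omega) (by omega), mul_zero]
      · have := h2 (n - j) (Finset.mem_Icc.2 (by omega))
        rw [show n - (n - j) = j by omega] at this
        rw [this, zero_mul]
  · intro hn
    exact absurd (Finset.mem_range.2 (by omega)) hn

end WeightedPowerSums

/-! ### Self-orthogonal subspaces of half dimension -/

/-- A self-orthogonal subspace of half dimension contains every vector orthogonal to it. -/
theorem mem_of_orthogonal_of_half_dim {F : Type*} [Field F] {n : ℕ}
    (W : Submodule F (Fin n → F)) (hdim : 2 * Module.finrank F W = n)
    (hself : ∀ x ∈ W, ∀ y ∈ W, ∑ i, x i * y i = 0)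
    (x : Fin n → F) (hx : ∀ y ∈ W, ∑ i, x i * y i = 0) : x ∈ W := by
  let B : LinearMap.BilinForm F (Fin n → F) := Matrix.toBilin' 1
  have hB : ∀ x y, B x y = ∑ i, x i * y i := fun x y => by
    simp [B, Matrix.toBilin'_apply', dotProduct]
  have hsymm : ∀ x y, B x y = B y x := fun x y => by simp [hB, mul_comm]
  have hrefl : B.IsRefl := fun x y h => by rw [hsymm]; exact h
  have hnd : LinearMap.Nondegenerate B := by
    refine (LinearMap.IsRefl.nondegenerate_iff_separatingLeft hrefl).2 ?_
    intro x hx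
    ext i
    simpa [hB, Pi.single_apply] using hx (Pi.single i 1)
  have hle : W ≤ B.orthogonal W := fun y hy z hz => by
    change B z y = 0
    rw [hB]; exact hself z hz y hy
  have hfin := LinearMap.BilinForm.finrank_orthogonal hnd W
  rw [Module.finrank_fin_fun] at hfin
  rw [Submodule.eq_of_le_of_finrank_eq hle (by omega)]
  intro z hz
  change B z x = 0
  rw [hsymm, hB]; exact hx z hz

/-! ### Generators of the twisted code -/

/-- The `j`-th generator of the twisted code: the evaluation vector of `x ^ j`, twisted by
`η * x ^ (k - 1 + t)` when `j = h`. -/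
def tgen {F : Type*} [Field F] {n : ℕ} (k t h : ℕ) (η : F) (α v : Fin n → F) (j : ℕ) :
    Fin n → F :=
  fun i => v i * (α i ^ j + if j = h then η * α i ^ (k - 1 + t) else 0)

theorem mul_eval_twistedPoly {F : Type*} [Field F] {n k t h : ℕ} (hhk : h < k) (η : F)
    (α v : Fin n → F) (c : ℕ → F) (i : Fin n) :
    v i * (twistedPoly k t h η c).eval (α i) =
      ∑ j ∈ Finset.range k, c j * tgen k t h η α v j i := by
  have : ∀ j, c j * tgen k t h η α v j i = v i * (c j * α i ^ j) +
      if j = h then v i * (η * c h * α i ^ (k - 1 + t)) else 0 := by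
    intro j
    rw [tgen]
    split_ifs with hj
    · subst hj; ring
    · ring
  simp only [this, Finset.sum_add_distrib, Finset.sum_ite_eq', Finset.mem_range, hhk, if_true,
    twistedPoly, eval_add, eval_finsetSum, eval_mul, eval_C, eval_pow, eval_X, mul_add,
    Finset.mul_sum]

/-- Evaluation at `n` distinct points is injective on twisted polynomials, whose degree is
less than `n`. -/
theorem coeff_eq_zero_of_eval_twistedPoly {F : Type*} [Field F] {n k t h : ℕ} (ht : 1 ≤ t)
    (hlt : k - 1 + t < n) {η : F} {α : Fin n → F} (hα : Function.Injective α) {c : ℕ → F}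
    (hc : ∀ i, (twistedPoly k t h η c).eval (α i) = 0) {j : ℕ} (hj : j < k) : c j = 0 := by
  have hdeg : (twistedPoly k t h η c).natDegree < n := by
    refine lt_of_le_of_lt (natDegree_add_le_of_degree_le (n := k - 1 + t) ?_ ?_) hlt
    · refine natDegree_sum_le_of_forall_le _ _ fun i hi => ?_
      have := Finset.mem_range.1 hi
      exact (natDegree_C_mul_X_pow_le _ _).trans (by omega)
    · exact natDegree_C_mul_X_pow_le _ _
  have h0 := eq_zero_of_natDegree_lt_card_of_eval_eq_zero _ hα hc (by simpa using hdeg)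
  have := congrArg (fun p => coeff p j) h0
  simpa [twistedPoly, coeff_C_mul, coeff_X_pow, hj, -map_mul,
    show j ≠ k - 1 + t by omega] using this

theorem mem_TGRS_iff {F : Type*} [Field F] {n k t h : ℕ} (hhk : h < k) (η : F)
    (α v x : Fin n → F) : x ∈ TGRS n k t h η α v ↔
      x ∈ Submodule.span F (Set.range fun j : Fin k => tgen k t h η α v j) := by
  rw [Submodule.mem_span_range_iff_exists_fun]
  constructor
  · rintro ⟨c, hc⟩
    refine ⟨fun j => c j, ?_⟩
    ext i
    rw [hc, mul_eval_twistedPoly hhk, Finset.sum_range, Finset.sum_apply]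
    rfl
  · rintro ⟨c, rfl⟩
    refine ⟨fun j => if hj : j < k then c ⟨j, hj⟩ else 0, fun i => ?_⟩
    rw [mul_eval_twistedPoly hhk, Finset.sum_range, Finset.sum_apply]
    simp

theorem finrank_span_tgen {F : Type*} [Field F] {n k t h : ℕ} (hhk : h < k) (ht : 1 ≤ t)
    (hlt : k - 1 + t < n) (η : F) {α v : Fin n → F} (hα : Function.Injective α)
    (hv : ∀ i, v i ≠ 0) :
    Module.finrank F (Submodule.span F (Set.range fun j : Fin k => tgen k t h η α v j)) = k := by
  rw [finrank_span_eq_card, Fintype.card_fin]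
  rw [Fintype.linearIndependent_iff]
  intro c hc j
  have key := coeff_eq_zero_of_eval_twistedPoly (h := h) (η := η) ht hlt hα
    (c := fun j => if hj : j < k then c ⟨j, hj⟩ else 0) (fun i => by
      refine (mul_eq_zero.1 ?_).resolve_left (hv i)
      rw [mul_eval_twistedPoly hhk, Finset.sum_range]
      simpa using congrFun hc i) j.2
  simpa using key

/-! ### Self-duality -/

/-- sufficiency of conditions (1)–(2) of Theorem 4.2 for
`C_{k,n}(α,v,t,h,η)` (with `n = 2k`, `h + t = k`) to be self-dual. -/
theorem stmt9 {F : Type*} [Field F] [Fintype F] (q n k t h : ℕ)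
    (hq : Fintype.card F = q) (hn : n = 2 * k) (hk : 4 ≤ k) (ht : 1 ≤ t)
    (hhk : h < k) (hht : h + t = k) (hktn : k - 1 + t ≤ n) (hnq : n ≤ q)
    (η : F) (hη : η ≠ 0) (α v : Fin n → F)
    (hα : Function.Injective α) (hv : ∀ i, v i ≠ 0)
    (u : Fin n → F) (hu : ∀ i, u i = (∏ j ∈ Finset.univ.erase i, (α i - α j))⁻¹)
    (a : ℕ → F)
    (ha : ∀ j, a j = (∏ l, (Polynomial.X - Polynomial.C (α l))).coeff j)
    (h1 : ∃ lam : F, lam ≠ 0 ∧ ∀ i, v i ^ 2 = lam * u i)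
    (h2 : ∀ m ∈ Finset.Icc 1 (t - 1), a (n - m) = 0)
    (h2' : 2 - η * a (n - (2 * t - 1)) = 0) :
    TGRS n k t h η α v = dualCode (TGRS n k t h η α v) := by
  obtain ⟨lam, -, hlam⟩ := h1
  simp only [ha] at h2 h2'
  set S := wPowerSum u α with hS
  have hlow : ∀ m, m < n - 1 → S m = 0 := fun m hm => by
    rw [hS, wPowerSum_low hα hu (by omega), if_neg (by omega)]
  have hone : S (n - 1) = 1 := by rw [hS, wPowerSum_low hα hu (by omega), if_pos rfl]
  have hmid : ∀ e, 1 ≤ e → e < t → S (n - 1 + e) = 0 := fun e he het =>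
    wPowerSum_mid hα hu h2 (by omega) he het
  have htop := wPowerSum_top hα hu h2 ht (by omega)
  rw [← hS] at htop
  -- inner products of generators, expanded in power sums of the `α l`
  have hexp : ∀ i j, ∑ l, tgen k t h η α v i l * tgen k t h η α v j l =
      lam * (S (i + j) + (if j = h then η * S (i + (k - 1 + t)) else 0) +
        (if i = h then η * S (j + (k - 1 + t)) else 0) +
        (if i = h then if j = h then η ^ 2 * S (2 * (k - 1 + t)) else 0 else 0)) := by
    intro i j
    have hterm : ∀ l, tgen k t h η α v i l * tgen k t h η α v j l =
        lam * (u l * α l ^ (i + j)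
          + (if j = h then η * (u l * α l ^ (i + (k - 1 + t))) else 0)
          + (if i = h then η * (u l * α l ^ (j + (k - 1 + t))) else 0)
          + (if i = h then if j = h then η ^ 2 * (u l * α l ^ (2 * (k - 1 + t))) else 0
              else 0)) := by
      intro l
      have hl := hlam l
      simp only [tgen, two_mul, pow_add]
      split_ifs
      · linear_combination (α l ^ i + η * (α l ^ (k - 1) * α l ^ t)) *
          (α l ^ j + η * (α l ^ (k - 1) * α l ^ t)) * hl
      · linear_combination (α l ^ i + η * (α l ^ (k - 1) * α l ^ t)) * α l ^ j * hl
      · linear_combination α l ^ i * (α l ^ j + η * (α l ^ (k - 1) * α l ^ t)) * hl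
      · linear_combination α l ^ i * α l ^ j * hl
    simp only [hterm, ← Finset.mul_sum, Finset.sum_add_distrib, hS, wPowerSum]
    split_ifs <;> simp [Finset.mul_sum]
  -- a pairing of the twisted monomial with an untwisted generator
  have hcross : ∀ i, i < k → i ≠ h → S (i + (k - 1 + t)) = 0 := by
    intro i hi hih
    rcases lt_or_gt_of_ne hih with hlt | hgt
    · exact hlow _ (by omega)
    · rw [show i + (k - 1 + t) = n - 1 + (i - h) by omega]
      exact hmid _ (by omega) (by omega)
  have hgen : ∀ i j, i < k → j < k →
      ∑ l, tgen k t h η α v i l * tgen k t h η α v j l = 0 := by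
    intro i j hi hj
    rw [hexp, hlow (i + j) (by omega)]
    by_cases hih : i = h <;> by_cases hjh : j = h
    · rw [if_pos hjh, if_pos hih, if_pos hih, if_pos hjh,
        show i + (k - 1 + t) = n - 1 by omega, show j + (k - 1 + t) = n - 1 by omega,
        show 2 * (k - 1 + t) = n - 1 + (2 * t - 1) by omega, hone, htop]
      linear_combination lam * η * h2'
    · simp [hih, hjh, hcross j hj hjh]
    · simp [hih, hjh, hcross i hi hih]
    · simp [hih, hjh]
  set W := Submodule.span F (Set.range fun j : Fin k => tgen k t h η α v j) with hW
  have hself : ∀ x ∈ W, ∀ y ∈ W, ∑ i, x i * y i = 0 := by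
    intro x hx y hy
    change x ⬝ᵥ y = 0
    induction hx, hy using Submodule.span_induction₂ with
    | mem_mem x y hx hy =>
      obtain ⟨i, rfl⟩ := hx
      obtain ⟨j, rfl⟩ := hy
      exact hgen i j i.2 j.2
    | zero_left y hy => simp
    | zero_right x hx => simp
    | add_left x y z _ _ _ h₁ h₂ => rw [add_dotProduct, h₁, h₂, add_zero]
    | add_right x y z _ _ _ h₁ h₂ => rw [dotProduct_add, h₁, h₂, add_zero]
    | smul_left r x y _ _ h₁ => rw [smul_dotProduct, h₁, smul_zero]
    | smul_right r x y _ _ h₁ => rw [dotProduct_smul, h₁, smul_zero]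
  have hdim : 2 * Module.finrank F W = n := by
    rw [hW, finrank_span_tgen hhk ht (by omega) η hα hv, hn]
  ext x
  constructor
  · intro hx c hc
    exact hself x ((mem_TGRS_iff hhk η α v x).1 hx) c ((mem_TGRS_iff hhk η α v c).1 hc)
  · intro hx
    refine (mem_TGRS_iff hhk η α v x).2 (mem_of_orthogonal_of_half_dim W hdim hself x ?_)
    exact fun y hy => hx y ((mem_TGRS_iff hhk η α v y).2 hy)
end

section
/- Let q be a prime power and let n, k, t, h be integers with n = 2k, k ≥ 4, t ≥ 1, 0 ≤ h < k, h + t = k, h ≥ t, k−1+t ≤ n ≤ q, and let η ∈ 𝔽_q*. Let α_1,…,α_n ∈ 𝔽_q be pairwise distinct and v ∈ (𝔽_q*)^n, and let u_i and a_j be as in the context. If the TGRS code C_{k,n}(α,v,t,h,η) is self-dual, then: (1) there exists λ ∈ 𝔽_q* such that v_i² = λ u_i for all 1 ≤ i ≤ n, and (2) a_{n−m} = 0 for m = 1,…,t−1 and 2 − η a_{n−(2t−1)} = 0. -/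
/-!
Write `s m = ∑ i, v i ^ 2 * α i ^ m` for the moments of the weights `v i ^ 2`, `b = k - 1 + t` for the
twist exponent and `G = ∏ (X - α l)`. Self-orthogonality of the code, tested on the basis `X ^ i`
(`i < k`, `i ≠ h`), `X ^ h + η X ^ b`, is a list of linear relations between moments
(`basis_orthogonal`); note that `h + b = n - 1`.

Products of two untwisted basis monomials give `s m = 0` for all `m ≤ n - 2`, except for two
exponents if `t = 1` and one exponent if `t = 2`; there the relations `s (i + h) + η s (i + b) = 0`
fill the gap (`moments_low`). Once the moments up to `n - 2` vanish, testing against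
`∏_{j ≠ i} (X - α j)`, monic of degree `n - 1`, gives `v i ^ 2 = s (n - 1) * u i`
(`weight_eq_of_moments`).

The relations with `h < i < k` now give `s (n - 1 + m) = 0` for `1 ≤ m ≤ t - 1`, and the pairing of
the twisted element with itself gives `2 s (n - 1) + η s (n - 1 + (2 t - 1)) = 0`. Since `G`
vanishes at all `α i`, the moments satisfy the linear recurrence `∑ j, G.coeff j * s (j + m) = 0`
(`moment_recurrence`); for `m = 0, …, t - 2` and `m = 2 t - 2` only the terms that yield the
claims about the coefficients of `G` survive.
-/

open Polynomial Finset

/-- The `m`-th moment `∑ i, v i ^ 2 * α i ^ m` of the weights `v i ^ 2` placed at the points `α i`. -/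
def moment {F : Type*} [Field F] {n : ℕ} (α v : Fin n → F) (m : ℕ) : F :=
  ∑ i, v i ^ 2 * α i ^ m

/-- Integration of a polynomial against the weights, expressed through its coefficients. -/
lemma sum_weight_eval {F : Type*} [Field F] {n : ℕ} (α v : Fin n → F) (p : Polynomial F) (N : ℕ)
    (hp : p.natDegree < N) :
    ∑ i, v i ^ 2 * p.eval (α i) = ∑ j ∈ Finset.range N, p.coeff j * moment α v j := by
  simp only [moment, Polynomial.eval_eq_sum_range' hp, Finset.mul_sum]
  rw [Finset.sum_comm]
  exact Finset.sum_congr rfl fun _ _ => Finset.sum_congr rfl fun _ _ => by ring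

lemma weight_eq_of_moments {F : Type*} [Field F] {n : ℕ} (α v : Fin n → F)
    (hα : Function.Injective α) (h0 : ∀ m, m + 2 ≤ n → moment α v m = 0) (i : Fin n) :
    v i ^ 2 = moment α v (n - 1) * (∏ j ∈ Finset.univ.erase i, (α i - α j))⁻¹ := by
  have hn : 0 < n := i.pos
  set p : Polynomial F := ∏ j ∈ Finset.univ.erase i, (X - C (α j)) with hp
  have hmon : p.Monic := monic_prod_of_monic _ _ fun j _ => monic_X_sub_C _
  have hdeg : p.natDegree = n - 1 := by
    rw [hp, natDegree_prod_of_monic _ _ fun j _ => monic_X_sub_C _]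
    simp
  have hne : (∏ j ∈ Finset.univ.erase i, (α i - α j)) ≠ 0 :=
    Finset.prod_ne_zero_iff.mpr fun j hj =>
      sub_ne_zero.mpr fun h => (Finset.ne_of_mem_erase hj) (hα h).symm
  have h1 := sum_weight_eval α v p n (by omega)
  rw [Finset.sum_eq_single i, Finset.sum_eq_single (n - 1)] at h1
  · have hc : p.coeff (n - 1) = 1 := by rw [← hdeg]; exact hmon
    rw [hc, one_mul] at h1
    rw [← h1, hp, eval_prod]
    simp [mul_assoc, mul_inv_cancel₀ hne]
  · intro j hj hj'
    rw [h0 j (by have := Finset.mem_range.mp hj; omega), mul_zero]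
  · intro h; exact absurd (Finset.mem_range.mpr (by omega)) h
  · intro j _ hj
    have : p.eval (α j) = 0 := by
      rw [hp, eval_prod]
      exact Finset.prod_eq_zero (Finset.mem_erase.mpr ⟨hj, Finset.mem_univ _⟩) (by simp)
    rw [this, mul_zero]
  · intro h; exact absurd (Finset.mem_univ _) h

/-- The linear recurrence of the moments: `X ^ m * ∏ (X - α l)` integrates to zero. -/
lemma moment_recurrence {F : Type*} [Field F] {n : ℕ} (α v : Fin n → F) (m : ℕ) :
    ∑ j ∈ Finset.range (n + 1), (∏ l, (X - C (α l))).coeff j * moment α v (j + m) = 0 := by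
  set G : Polynomial F := ∏ l, (X - C (α l)) with hG
  have hdeg : G.natDegree < n + 1 := by
    rw [hG, natDegree_prod_of_monic _ _ fun j _ => monic_X_sub_C _]
    simp
  have h0 : ∀ i, G.eval (α i) = 0 := fun i => by
    rw [hG, eval_prod]
    exact Finset.prod_eq_zero (Finset.mem_univ i) (by simp)
  calc _ = ∑ i, v i ^ 2 * α i ^ m * G.eval (α i) := by
        simp only [moment, Polynomial.eval_eq_sum_range' hdeg, Finset.mul_sum]
        rw [Finset.sum_comm]
        exact Finset.sum_congr rfl fun _ _ => Finset.sum_congr rfl fun _ _ => by ring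
    _ = 0 := by simp [h0]

/-- The value at `x` of the basis element of the space of twisted polynomials indexed by `i`. -/
lemma eval_twistedPoly_single {F : Type*} [Field F] (k t h : ℕ) (η x : F) (i : ℕ) (hi : i < k) :
    (twistedPoly k t h η (fun j => if j = i then 1 else 0)).eval x
      = x ^ i + (if i = h then η else 0) * x ^ (k - 1 + t) := by
  simp only [twistedPoly, eval_add, eval_finsetSum, eval_mul, eval_C, eval_pow, eval_X,
    ite_mul, one_mul, zero_mul, mul_ite, mul_one, mul_zero]
  simp [hi, eq_comm]

/-- Orthogonality of two basis codewords, as a relation between moments. -/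
lemma basis_orthogonal {F : Type*} [Field F] {n : ℕ} (k t h : ℕ) (η : F) (α v : Fin n → F)
    (hso : TGRS n k t h η α v ⊆ dualCode (TGRS n k t h η α v)) (i j : ℕ) (hi : i < k) (hj : j < k) :
    moment α v (i + j) + (if i = h then η else 0) * moment α v (k - 1 + t + j)
      + (if j = h then η else 0) * moment α v (i + (k - 1 + t))
      + (if i = h then η else 0) * (if j = h then η else 0)
        * moment α v (k - 1 + t + (k - 1 + t)) = 0 := by
  have key := hso (a := fun l => v l * (twistedPoly k t h η fun m => if m = i then 1 else 0).eval (α l))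
    ⟨_, fun _ => rfl⟩
    (fun l => v l * (twistedPoly k t h η fun m => if m = j then 1 else 0).eval (α l))
    ⟨_, fun _ => rfl⟩
  simp only [eval_twistedPoly_single k t h η _ _ hi, eval_twistedPoly_single k t h η _ _ hj] at key
  refine Eq.trans ?_ key
  simp only [moment, Finset.mul_sum, ← Finset.sum_add_distrib]
  exact Finset.sum_congr rfl fun _ _ => by ring

/-- The moment relations force the moments of order at most `n - 2 = 2 k - 2` to vanish. The
hypotheses are the relations between two untwisted basis elements and between an untwisted one
and the twisted one. -/
lemma moments_low {F : Type*} [Field F] (s : ℕ → F) (k t h : ℕ) (η : F) (hη : η ≠ 0)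
    (hk : 4 ≤ k) (ht : 1 ≤ t) (hht : h + t = k) (hth : t ≤ h)
    (h1 : ∀ i j, i < k → j < k → i ≠ h → j ≠ h → s (i + j) = 0)
    (h2 : ∀ i, i < k → i ≠ h → s (i + h) + η * s (i + (k - 1 + t)) = 0)
    (m : ℕ) (hm : m + 2 ≤ 2 * k) : s m = 0 := by
  have h1' : ∀ m i, i ≤ m → i < k → m - i < k → i ≠ h → m - i ≠ h → s m = 0 := by
    intro m i a1 a2 a3 a4 a5
    have := h1 i (m - i) a2 a3 a4 a5
    rwa [Nat.add_sub_cancel' a1] at this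
  -- A decomposition `m = i + j` avoiding `h` exists among a few extreme choices of `i`.
  have hgen : ∀ m, m + 2 ≤ 2 * k → (t = 1 → m + 4 ≤ 2 * k) → (t = 2 → m + 3 ≠ 2 * k) → s m = 0 := by
    intro m b1 b2 b3
    by_cases hmk : m < k
    · by_cases c0 : m = h
      · exact h1' m 1 (by omega) (by omega) (by omega) (by omega) (by omega)
      · exact h1' m 0 (by omega) (by omega) (by omega) (by omega) (by omega)
    · by_cases c0 : k - 1 ≠ h ∧ m - (k - 1) ≠ h
      · exact h1' m (k - 1) (by omega) (by omega) (by omega) (by omega) (by omega)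
      · by_cases c1 : k - 2 ≠ h ∧ m - (k - 2) ≠ h ∧ m - (k - 2) < k
        · exact h1' m (k - 2) (by omega) (by omega) (by omega) (by omega) (by omega)
        · exact h1' m (k - 3) (by omega) (by omega) (by omega) (by omega) (by omega)
  -- A vanishing moment `s (i + h)` makes `s (i + b)` vanish.
  have hstep : ∀ i, i < k → i ≠ h → s (i + h) = 0 → s (i + (k - 1 + t)) = 0 := by
    intro i a1 a2 a3
    have := h2 i a1 a2
    rw [a3, zero_add] at this
    exact (mul_eq_zero.mp this).resolve_left hη
  by_cases c1 : t = 1 ∧ 2 * k < m + 4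
  · obtain ⟨rfl, c⟩ := c1
    have e3 : s (2 * k - 3) = 0 := by
      have := hstep (k - 3) (by omega) (by omega) (hgen _ (by omega) (by omega) (by omega))
      rwa [show k - 3 + (k - 1 + 1) = 2 * k - 3 by omega] at this
    have e2 : s (2 * k - 2) = 0 := by
      have := hstep (k - 2) (by omega) (by omega)
        (by rwa [show k - 2 + h = 2 * k - 3 by omega])
      rwa [show k - 2 + (k - 1 + 1) = 2 * k - 2 by omega] at this
    rcases (by omega : m = 2 * k - 3 ∨ m = 2 * k - 2) with rfl | rfl
    · exact e3
    · exact e2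
  · by_cases c2 : t = 2 ∧ m + 3 = 2 * k
    · have := hstep (k - 4) (by omega) (by omega) (hgen _ (by omega) (by omega) (by omega))
      rwa [show k - 4 + (k - 1 + t) = m by omega] at this
    · exact hgen m hm (by omega) (by omega)

/-- necessity of conditions (1)–(2) of Theorem 4.2: if `h ≥ t` and
`C_{k,n}(α,v,t,h,η)` (with `n = 2k`, `h + t = k`) is self-dual, then they hold. -/
theorem stmt10 {F : Type*} [Field F] [Fintype F] (q n k t h : ℕ)
    (hq : Fintype.card F = q) (hn : n = 2 * k) (hk : 4 ≤ k) (ht : 1 ≤ t)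
    (hhk : h < k) (hht : h + t = k) (hth : t ≤ h) (hktn : k - 1 + t ≤ n) (hnq : n ≤ q)
    (η : F) (hη : η ≠ 0) (α v : Fin n → F)
    (hα : Function.Injective α) (hv : ∀ i, v i ≠ 0)
    (u : Fin n → F) (hu : ∀ i, u i = (∏ j ∈ Finset.univ.erase i, (α i - α j))⁻¹)
    (a : ℕ → F)
    (ha : ∀ j, a j = (∏ l, (Polynomial.X - Polynomial.C (α l))).coeff j)
    (hsd : TGRS n k t h η α v = dualCode (TGRS n k t h η α v)) :
    (∃ lam : F, lam ≠ 0 ∧ ∀ i, v i ^ 2 = lam * u i) ∧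
    (∀ m ∈ Finset.Icc 1 (t - 1), a (n - m) = 0) ∧
    2 - η * a (n - (2 * t - 1)) = 0 := by
  have hb := basis_orthogonal k t h η α v hsd.le
  have hlow : ∀ m, m + 2 ≤ n → moment α v m = 0 := by
    subst hn
    refine moments_low (moment α v) k t h η hη hk ht hht hth ?_ ?_
    · intro i j hi hj hih hjh
      simpa [hih, hjh] using hb i j hi hj
    · intro i hi hih
      simpa [hih] using hb i h hi hhk
  set s := moment α v with hs
  have hw : ∀ i, v i ^ 2 = s (n - 1) * u i := fun i => by
    rw [hu i]; exact weight_eq_of_moments α v hα hlow i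
  have hlam : s (n - 1) ≠ 0 := by
    intro h0
    have := hw ⟨0, by omega⟩
    rw [h0, zero_mul] at this
    exact hv _ (pow_eq_zero_iff two_ne_zero |>.mp this)
  -- The relations with `i > h`; here `h + (k - 1 + t) = n - 1`.
  have hmid : ∀ m, n ≤ m → m + 2 ≤ n + t → s m = 0 := by
    intro m h1 h2
    have h3 := hb (m - (k - 1 + t)) h (by omega) hhk
    rw [if_neg (by omega), if_pos rfl, hlow _ (by omega),
      show m - (k - 1 + t) + (k - 1 + t) = m by omega] at h3
    simpa [hη] using h3
  have htop : 2 * s (n - 1) + η * s (n + 2 * t - 2) = 0 := by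
    have h3 := hb h h hhk hhk
    rw [if_pos rfl, hlow _ (by omega), show k - 1 + t + h = n - 1 by omega,
      show h + (k - 1 + t) = n - 1 by omega,
      show k - 1 + t + (k - 1 + t) = n + 2 * t - 2 by omega] at h3
    have h4 : η * (2 * s (n - 1) + η * s (n + 2 * t - 2)) = 0 := by
      rw [← h3]; ring
    exact (mul_eq_zero.mp h4).resolve_left hη
  have hrec : ∀ m, ∑ j ∈ Finset.range (n + 1), a j * s (j + m) = 0 := fun m => by
    simp only [ha]; exact moment_recurrence α v m
  have han : a n = 1 := by
    have hmon : (∏ l, (X - C (α l))).Monic := monic_prod_of_monic _ _ fun j _ => monic_X_sub_C _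
    have hdeg : (∏ l, (X - C (α l))).natDegree = n := by
      rw [natDegree_prod_of_monic _ _ fun j _ => monic_X_sub_C _]; simp
    have := hmon.coeff_natDegree
    rwa [hdeg, ← ha] at this
  have hcoef : ∀ m ∈ Finset.Icc 1 (t - 1), a (n - m) = 0 := by
    intro m hm
    obtain ⟨hm1, hm2⟩ := Finset.mem_Icc.mp hm
    have hr := hrec (m - 1)
    rw [Finset.sum_eq_single (n - m), show n - m + (m - 1) = n - 1 by omega] at hr
    · exact (mul_eq_zero.mp hr).resolve_right hlam
    · intro j hj hjm
      have hj' := Finset.mem_range.mp hj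
      rcases lt_or_gt_of_ne hjm with hlt | hgt
      · rw [hlow _ (by omega), mul_zero]
      · rw [hmid _ (by omega) (by omega), mul_zero]
    · intro hc; exact absurd (Finset.mem_range.mpr (by omega)) hc
  refine ⟨⟨s (n - 1), hlam, hw⟩, hcoef, ?_⟩
  have hr := hrec (2 * t - 2)
  -- Only the indices `j = n - (2 * t - 1)` and `j = n` contribute.
  rw [Finset.sum_range_succ, Finset.sum_eq_single (n - (2 * t - 1)),
    show n - (2 * t - 1) + (2 * t - 2) = n - 1 by omega,
    show n + (2 * t - 2) = n + 2 * t - 2 by omega, han] at hr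
  · have h4 : s (n - 1) * (2 - η * a (n - (2 * t - 1))) = 0 := by
      linear_combination htop - η * hr
    exact (mul_eq_zero.mp h4).resolve_left hlam
  · intro j hj hjm
    have hj' := Finset.mem_range.mp hj
    by_cases c1 : j < n - (2 * t - 1)
    · rw [hlow _ (by omega), mul_zero]
    · by_cases c2 : j + t ≤ n
      · rw [hmid _ (by omega) (by omega), mul_zero]
      · have := hcoef (n - j) (Finset.mem_Icc.mpr ⟨by omega, by omega⟩)
        rw [show n - (n - j) = j by omega] at this
        rw [this, zero_mul]
  · intro hc; exact absurd (Finset.mem_range.mpr (by omega)) hc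
end
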